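/- Let (Σ_k^+, d, σ) be the full one-sided shift on k ≥ 2 symbols. Then the neutralized topological entropy satisfies \tilde h_top(σ, Σ_k^+) = log k, and hence for every α > 0, \tilde h_top(σ, Σ_k^+) = log k < (1+α)·log k = h_top^α(σ, Σ_k^+). -/

import Mathlib

open Filter Set MeasureTheory ENNReal
open scoped Classical NNReal

noncomputable section

namespace AlphaBS

variable {X : Type*}

/-- Birkhoff sum `S_n φ (x) = ∑_{j<n} φ(f^j x)`. -/
def birk (f : X → X) (φ : X → ℝ) (n : ℕ) (x : X) : ℝ :=
  ∑ j ∈ Finset.range n, φ (f^[j] x)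

/-- The α-Bowen ball `B_n^α(x,ε) = {y : d_n^α(x,y) < ε}`, where
`d_n^α(x,y) = max_{0 ≤ i ≤ n-1} e^{αi} d(f^i x, f^i y)`, w.r.t. an explicit distance `d`. -/
def bowenBall (d : X → X → ℝ) (f : X → X) (α : ℝ) (n : ℕ) (x : X) (ε : ℝ) : Set X :=
  {y | ∀ i < n, Real.exp (α * i) * d (f^[i] x) (f^[i] y) < ε}

section covers

variable (d : X → X → ℝ) (f : X → X)

/-- `M^α(K,s,ε,n,φ)`: infimum over countable families of α-Bowen balls covering `K`. -/
def Mpre (φ : X → ℝ) (α s ε : ℝ) (N : ℕ) (K : Set X) : ℝ≥0∞ :=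
  ⨅ (c : ℕ → X) (m : ℕ → ℕ) (I : Set ℕ) (_ : I.Nonempty) (_ : ∀ i ∈ I, N ≤ m i)
    (_ : K ⊆ ⋃ i ∈ I, bowenBall d f α (m i) (c i) ε),
    ∑' i : I, ENNReal.ofReal
      (Real.exp (-s * sSup (birk f φ (m i) '' bowenBall d f α (m i) (c i) ε)))

/-- `M^α(K,s,ε,φ) = lim_{n→∞} M^α(K,s,ε,n,φ)` (the quantity is nondecreasing in `n`). -/
def Mlim (φ : X → ℝ) (α s ε : ℝ) (K : Set X) : ℝ≥0∞ := ⨆ N : ℕ, Mpre d f φ α s ε N K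

/-- `M^α(K,ε,φ) = inf {s ≥ 0 : M^α(K,s,ε,φ) = 0}`. -/
def Mcrit (φ : X → ℝ) (α ε : ℝ) (K : Set X) : EReal :=
  ⨅ (s : ℝ) (_ : 0 ≤ s) (_ : Mlim d f φ α s ε K = 0), (s : EReal)

/-- The α-BS dimension `dim_BS^α(f,K,φ) = lim_{ε→0} M^α(K,ε,φ)`
(the quantity is nonincreasing in `ε`). -/
def dimBS (φ : X → ℝ) (α : ℝ) (K : Set X) : EReal :=
  ⨆ (ε : ℝ) (_ : 0 < ε), Mcrit d f φ α ε K

/-- `M^{α,1}(K,s,ε,n,φ)`: the variant with weights `exp(-s·S_{n_i}φ(x_i))` at the centers. -/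
def M1pre (φ : X → ℝ) (α s ε : ℝ) (N : ℕ) (K : Set X) : ℝ≥0∞ :=
  ⨅ (c : ℕ → X) (m : ℕ → ℕ) (I : Set ℕ) (_ : I.Nonempty) (_ : ∀ i ∈ I, N ≤ m i)
    (_ : K ⊆ ⋃ i ∈ I, bowenBall d f α (m i) (c i) ε),
    ∑' i : I, ENNReal.ofReal (Real.exp (-s * birk f φ (m i) (c i)))

def M1lim (φ : X → ℝ) (α s ε : ℝ) (K : Set X) : ℝ≥0∞ := ⨆ N : ℕ, M1pre d f φ α s ε N K

def M1crit (φ : X → ℝ) (α ε : ℝ) (K : Set X) : EReal :=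
  ⨅ (s : ℝ) (_ : 0 ≤ s) (_ : M1lim d f φ α s ε K = 0), (s : EReal)

/-- The modified α-BS dimension `\widetilde{dim}_{BS}^α(f,K,φ)`. -/
def dimBS1 (φ : X → ℝ) (α : ℝ) (K : Set X) : EReal :=
  ⨆ (ε : ℝ) (_ : 0 < ε), M1crit d f φ α ε K

/-- `M^α(K,s,ε,n,1)`: covering quantity with weights `exp(-s n_i)`. -/
def Epre (α s ε : ℝ) (N : ℕ) (K : Set X) : ℝ≥0∞ :=
  ⨅ (c : ℕ → X) (m : ℕ → ℕ) (I : Set ℕ) (_ : I.Nonempty) (_ : ∀ i ∈ I, N ≤ m i)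
    (_ : K ⊆ ⋃ i ∈ I, bowenBall d f α (m i) (c i) ε),
    ∑' i : I, ENNReal.ofReal (Real.exp (-s * (m i : ℝ)))

def Elim (α s ε : ℝ) (K : Set X) : ℝ≥0∞ := ⨆ N : ℕ, Epre d f α s ε N K

def Ecrit (α ε : ℝ) (K : Set X) : EReal :=
  ⨅ (s : ℝ) (_ : 0 ≤ s) (_ : Elim d f α s ε K = 0), (s : EReal)

/-- The α-Bowen topological entropy `h_top^{α,B}(f,K)` (i.e. `dim_BS^α(f,K,1)`,
computed with weights `exp(-s n_i)`). -/
def entB (α : ℝ) (K : Set X) : EReal := ⨆ (ε : ℝ) (_ : 0 < ε), Ecrit d f α ε K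

/-- `ℳ_B^α(K,s,ε,n,h)`: the Pesin pressure covering quantity. -/
def Ppre (h : X → ℝ) (α s ε : ℝ) (N : ℕ) (K : Set X) : ℝ≥0∞ :=
  ⨅ (c : ℕ → X) (m : ℕ → ℕ) (I : Set ℕ) (_ : I.Nonempty) (_ : ∀ i ∈ I, N ≤ m i)
    (_ : K ⊆ ⋃ i ∈ I, bowenBall d f α (m i) (c i) ε),
    ∑' i : I, ENNReal.ofReal
      (Real.exp (-s * (m i : ℝ) + sSup (birk f h (m i) '' bowenBall d f α (m i) (c i) ε)))

def Plim (h : X → ℝ) (α s ε : ℝ) (K : Set X) : ℝ≥0∞ := ⨆ N : ℕ, Ppre d f h α s ε N K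

/-- `ℳ_B^α(K,ε,h) = inf {s ∈ ℝ : ℳ_B^α(K,s,ε,h) = 0}`. -/
def Pcrit (h : X → ℝ) (α ε : ℝ) (K : Set X) : EReal :=
  ⨅ (s : ℝ) (_ : Plim d f h α s ε K = 0), (s : EReal)

/-- The α-Pesin topological pressure `P_B^α(f,K,h)`. -/
def pressureB (h : X → ℝ) (α : ℝ) (K : Set X) : EReal :=
  ⨆ (ε : ℝ) (_ : 0 < ε), Pcrit d f h α ε K

/-- `W^α(K,s,ε,n,φ)`: the weighted covering quantity. -/
def Wpre (φ : X → ℝ) (α s ε : ℝ) (N : ℕ) (K : Set X) : ℝ≥0∞ :=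
  ⨅ (c : ℕ → X) (m : ℕ → ℕ) (w : ℕ → ℝ) (I : Set ℕ) (_ : I.Nonempty)
    (_ : ∀ i ∈ I, N ≤ m i) (_ : ∀ i ∈ I, 0 < w i)
    (_ : ∀ x ∈ K, (1 : ℝ≥0∞) ≤
      ∑' i : I, (bowenBall d f α (m i) (c i) ε).indicator
        (fun _ => ENNReal.ofReal (w i)) x),
    ∑' i : I, ENNReal.ofReal (w i * Real.exp (-s * birk f φ (m i) (c i)))

def Wlim (φ : X → ℝ) (α s ε : ℝ) (K : Set X) : ℝ≥0∞ := ⨆ N : ℕ, Wpre d f φ α s ε N K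

def Wcrit (φ : X → ℝ) (α ε : ℝ) (K : Set X) : EReal :=
  ⨅ (s : ℝ) (_ : 0 ≤ s) (_ : Wlim d f φ α s ε K = 0), (s : EReal)

/-- The weighted α-BS dimension `dim_BS^{α,W}(f,K,φ)`. -/
def dimBSW (φ : X → ℝ) (α : ℝ) (K : Set X) : EReal :=
  ⨆ (ε : ℝ) (_ : 0 < ε), Wcrit d f φ α ε K

/-- `r_n(f,α,X,ε)`: the smallest cardinality of an `(n,α,ε)`-spanning set of `X`. -/
def spanNum (α ε : ℝ) (n : ℕ) : ℕ :=
  sInf {m : ℕ | ∃ E : Finset X, E.card = m ∧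
    ∀ x : X, ∃ y ∈ E, ∀ i < n, Real.exp (α * i) * d (f^[i] y) (f^[i] x) < ε}

/-- `h_top^α(f,X,ε) = limsup_n (1/n) log r_n(f,α,X,ε)`. -/
def htopSpanE (α ε : ℝ) : EReal :=
  limsup (fun n : ℕ => ((Real.log (spanNum d f α ε n) / n : ℝ) : EReal)) atTop

/-- the α-topological entropy `h_top^α(f,X) = lim_{ε→0} h_top^α(f,X,ε)`
(the quantity is nonincreasing in `ε`). -/
def htopSpan (α : ℝ) : EReal := ⨆ (ε : ℝ) (_ : 0 < ε), htopSpanE d f α ε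

/-- `r_n(X, e^{-nε})`: smallest number of ε-neutralized Bowen balls needed to cover `X`. -/
def neutNum (ε : ℝ) (n : ℕ) : ℕ :=
  sInf {m : ℕ | ∃ E : Finset X, E.card = m ∧
    ∀ x : X, ∃ y ∈ E, ∀ j < n, d (f^[j] y) (f^[j] x) < Real.exp (-(n : ℝ) * ε)}

/-- the neutralized ε-topological entropy. -/
def neutEntE (ε : ℝ) : EReal :=
  limsup (fun n : ℕ => ((Real.log (neutNum d f ε n) / n : ℝ) : EReal)) atTop

/-- the neutralized topological entropy `\tilde h_top(f,X) = inf_{ε>0} \tilde h_top(f,X,ε)`. -/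
def neutEnt : EReal := ⨅ (ε : ℝ) (_ : 0 < ε), neutEntE d f ε

end covers

/-- `-log t`, valued in `[0,∞]` for `t ∈ [0,1]`, with `-log 0 = ∞`. -/
def negLog (t : ℝ≥0∞) : ℝ≥0∞ := if t = 0 then ⊤ else ENNReal.ofReal (-Real.log t.toReal)

section measure

variable [MeasurableSpace X]

/-- `P_μ^α(f,x,φ) = lim_{ε→0} liminf_n (-log μ(B_n^α(x,ε)))/S_nφ(x)`. -/
def localBKphi (d : X → X → ℝ) (f : X → X) (φ : X → ℝ) (α : ℝ) (μ : Measure X)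
    (x : X) : ℝ≥0∞ :=
  ⨆ (ε : ℝ) (_ : 0 < ε),
    liminf (fun n : ℕ =>
      negLog (μ (bowenBall d f α n x ε)) / ENNReal.ofReal (birk f φ n x)) atTop

/-- The α-local Brin–Katok entropy `P_μ^α(f,φ) = ∫ P_μ^α(f,x,φ) dμ(x)`. -/
def BKphi (d : X → X → ℝ) (f : X → X) (φ : X → ℝ) (α : ℝ) (μ : Measure X) : ℝ≥0∞ :=
  ∫⁻ x, localBKphi d f φ α μ x ∂μ

/-- `lim_{ε→0} liminf_n (-log μ(B_n^α(x,ε)))/n`. -/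
def localBKn (d : X → X → ℝ) (f : X → X) (α : ℝ) (μ : Measure X) (x : X) : ℝ≥0∞ :=
  ⨆ (ε : ℝ) (_ : 0 < ε),
    liminf (fun n : ℕ => negLog (μ (bowenBall d f α n x ε)) / (n : ℝ≥0∞)) atTop

/-- The lower α-local Brin–Katok entropy `\underline h_μ^{BK}(f,α)`. -/
def BKn (d : X → X → ℝ) (f : X → X) (α : ℝ) (μ : Measure X) : ℝ≥0∞ :=
  ∫⁻ x, localBKn d f α μ x ∂μ

end measure

/-- diameter of a set w.r.t. an explicit distance. -/
def ediamD (d : X → X → ℝ) (U : Set X) : ℝ≥0∞ :=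
  ⨆ (x ∈ U) (y ∈ U), ENNReal.ofReal (d x y)

/-- pre-Hausdorff measure at scale `δ`. -/
def hausPre (d : X → X → ℝ) (s δ : ℝ) (E : Set X) : ℝ≥0∞ :=
  ⨅ (U : ℕ → Set X) (_ : E ⊆ ⋃ i, U i) (_ : ∀ i, ediamD d (U i) ≤ ENNReal.ofReal δ),
    ∑' i, ediamD d (U i) ^ s

/-- `s`-dimensional Hausdorff measure w.r.t. an explicit distance. -/
def hausMeas (d : X → X → ℝ) (s : ℝ) (E : Set X) : ℝ≥0∞ :=
  ⨆ (δ : ℝ) (_ : 0 < δ), hausPre d s δ E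

/-- Hausdorff dimension w.r.t. an explicit distance:
`dim_H(E,d) = inf {s ≥ 0 : H^s(E) = 0}`. -/
def hausDim (d : X → X → ℝ) (E : Set X) : ℝ≥0∞ :=
  ⨅ (s : ℝ≥0) (_ : hausMeas d s E = 0), (s : ℝ≥0∞)

/-- The left shift on `Σ_k^+ = {0,…,k-1}^ℕ`. -/
def shiftMap (k : ℕ) : (ℕ → Fin k) → (ℕ → Fin k) := fun x n => x (n + 1)

/-- The metric `d(x,y) = e^{-n(x,y)}` on `Σ_k^+`, where `n(x,y)` is the least index
at which `x` and `y` differ, and `d(x,x) = 0`. -/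
def shiftDist {k : ℕ} (x y : ℕ → Fin k) : ℝ :=
  if x = y then 0 else Real.exp (-((sInf {n : ℕ | x n ≠ y n} : ℕ) : ℝ))

/-- The subshift of finite type `Σ_A^+` determined by the incidence matrix `A`. -/
def SFT {k : ℕ} (A : Matrix (Fin k) (Fin k) ℝ) : Type :=
  {x : ℕ → Fin k // ∀ n, A (x n) (x (n + 1)) = 1}

/-- The left shift restricted to `Σ_A^+`. -/
def sftShift {k : ℕ} (A : Matrix (Fin k) (Fin k) ℝ) : SFT A → SFT A :=
  fun x => ⟨fun n => x.1 (n + 1), fun n => x.2 (n + 1)⟩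

/-- The metric `d` restricted to `Σ_A^+`. -/
def sftDist {k : ℕ} (A : Matrix (Fin k) (Fin k) ℝ) : SFT A → SFT A → ℝ :=
  fun x y => shiftDist x.1 y.1

end AlphaBS

open AlphaBS

lemma iter_shift {k : ℕ} (i : ℕ) (x : ℕ → Fin k) (j : ℕ) :
    (shiftMap k)^[i] x j = x (i + j) := by
  induction i generalizing x with
  | zero => simp
  | succ i ih =>
    rw [Function.iterate_succ_apply, ih]
    simp only [shiftMap]
    congr 1
    omega

lemma dist_lt_iff {k : ℕ} (x y : ℕ → Fin k) (a t : ℝ) :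
    Real.exp a * shiftDist x y < Real.exp t ↔ ∀ j : ℕ, (j : ℝ) ≤ a - t → x j = y j := by
  unfold shiftDist
  split_ifs with h
  · subst h
    simp [Real.exp_pos]
  · rw [← Real.exp_add, Real.exp_lt_exp]
    have hne : {n : ℕ | x n ≠ y n}.Nonempty := by
      by_contra hc
      apply h
      funext n
      by_contra hn
      exact hc ⟨n, hn⟩
    constructor
    · intro hlt j hj
      by_contra hn
      have h1 : sInf {n : ℕ | x n ≠ y n} ≤ j := Nat.sInf_le hn
      have h2 : ((sInf {n : ℕ | x n ≠ y n} : ℕ) : ℝ) ≤ j := by exact_mod_cast h1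
      linarith
    · intro hall
      by_contra hc
      exact Nat.sInf_mem hne (hall _ (by linarith))

lemma num_aux {k : ℕ} (hk : 2 ≤ k) (P : (ℕ → Fin k) → (ℕ → Fin k) → Prop) (L : ℕ)
    (h : ∀ x y, (∀ j < L, y j = x j) → P y x) :
    ∃ m ≤ k ^ L, m ∈ {m : ℕ | ∃ E : Finset (ℕ → Fin k), E.card = m ∧
      ∀ x, ∃ y ∈ E, P y x} := by
  let g : (Fin L → Fin k) → (ℕ → Fin k) :=
    fun w j => if hj : j < L then w ⟨j, hj⟩ else ⟨0, by omega⟩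
  refine ⟨(Finset.univ.image g).card, ?_, Finset.univ.image g, rfl, ?_⟩
  · refine Finset.card_image_le.trans ?_
    simp
  · intro x
    refine ⟨g (fun j => x j), Finset.mem_image_of_mem _ (Finset.mem_univ _), h _ _ ?_⟩
    intro j hj
    simp [g, hj]

lemma num_le {k : ℕ} (hk : 2 ≤ k) (P : (ℕ → Fin k) → (ℕ → Fin k) → Prop) (L : ℕ)
    (h : ∀ x y, (∀ j < L, y j = x j) → P y x) :
    sInf {m : ℕ | ∃ E : Finset (ℕ → Fin k), E.card = m ∧
      ∀ x, ∃ y ∈ E, P y x} ≤ k ^ L := by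
  obtain ⟨m, hm, hm'⟩ := num_aux hk P L h
  exact (Nat.sInf_le hm').trans hm

lemma le_num {k : ℕ} (hk : 2 ≤ k) (P : (ℕ → Fin k) → (ℕ → Fin k) → Prop) (L L' : ℕ)
    (h' : ∀ x y, (∀ j < L', y j = x j) → P y x)
    (h : ∀ x y, P y x → (∀ j < L, y j = x j)) :
    k ^ L ≤ sInf {m : ℕ | ∃ E : Finset (ℕ → Fin k), E.card = m ∧
      ∀ x, ∃ y ∈ E, P y x} := by
  obtain ⟨m, -, hm'⟩ := num_aux hk P L' h'
  obtain ⟨E, hE, hspan⟩ := Nat.sInf_mem ⟨m, hm'⟩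
  rw [← hE]
  let r : (ℕ → Fin k) → (Fin L → Fin k) := fun x j => x j
  have hs : (Finset.univ : Finset (Fin L → Fin k)) ⊆ E.image r := by
    intro w _
    let x : ℕ → Fin k := fun j => if hj : j < L then w ⟨j, hj⟩ else ⟨0, by omega⟩
    obtain ⟨y, hy, hP⟩ := hspan x
    refine Finset.mem_image.2 ⟨y, hy, ?_⟩
    funext j
    have := h x y hP j j.2
    simp [r, this, x]
  have := (Finset.card_le_card hs).trans Finset.card_image_le
  simpa using this

lemma tendsto_aux (c b l : ℝ) :
    Tendsto (fun n : ℕ => (((c * n + b) * l / n : ℝ) : EReal)) atTop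
      (nhds ((c * l : ℝ) : EReal)) := by
  refine (continuous_coe_real_ereal.tendsto _).comp ?_
  have h1 : Tendsto (fun n : ℕ => c * l + (b * l) / (n : ℝ)) atTop (nhds (c * l + 0)) :=
    tendsto_const_nhds.add (tendsto_const_div_atTop_nhds_zero_nat _)
  rw [add_zero] at h1
  refine h1.congr' ?_
  filter_upwards [eventually_gt_atTop 0] with n hn
  have : (n : ℝ) ≠ 0 := by positivity
  field_simp

lemma limsup_upper {k : ℕ} (hk : 2 ≤ k) (N : ℕ → ℕ) (c b : ℝ) (hb : 0 ≤ b) (hc : 0 ≤ c)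
    (h : ∀ n : ℕ, 1 ≤ n → ∃ L : ℕ, N n ≤ k ^ L ∧ (L : ℝ) ≤ c * n + b) :
    limsup (fun n : ℕ => ((Real.log (N n) / n : ℝ) : EReal)) atTop
      ≤ ((c * Real.log k : ℝ) : EReal) := by
  rw [← (tendsto_aux c b (Real.log k)).limsup_eq]
  have hl : 0 ≤ Real.log k := Real.log_natCast_nonneg k
  refine limsup_le_limsup ?_
  filter_upwards [eventually_ge_atTop 1] with n hn
  obtain ⟨L, h1, h2⟩ := h n hn
  rw [EReal.coe_le_coe_iff]
  refine div_le_div_of_nonneg_right ?_ (by positivity)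
  rcases Nat.eq_zero_or_pos (N n) with h0 | h0
  · rw [h0]
    simp only [Nat.cast_zero, Real.log_zero]
    positivity
  calc Real.log (N n) ≤ Real.log ((k : ℝ) ^ L) :=
        Real.log_le_log (by exact_mod_cast h0) (by exact_mod_cast h1)
    _ = L * Real.log k := Real.log_pow _ _
    _ ≤ _ := mul_le_mul_of_nonneg_right h2 hl

lemma limsup_lower {k : ℕ} (hk : 2 ≤ k) (N : ℕ → ℕ) (c b : ℝ)
    (h : ∀ n : ℕ, 1 ≤ n → ∃ L : ℕ, k ^ L ≤ N n ∧ c * n + b ≤ (L : ℝ)) :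
    ((c * Real.log k : ℝ) : EReal) ≤
    limsup (fun n : ℕ => ((Real.log (N n) / n : ℝ) : EReal)) atTop := by
  rw [← (tendsto_aux c b (Real.log k)).limsup_eq]
  have hl : 0 ≤ Real.log k := Real.log_natCast_nonneg k
  refine limsup_le_limsup ?_
  filter_upwards [eventually_ge_atTop 1] with n hn
  obtain ⟨L, h1, h2⟩ := h n hn
  rw [EReal.coe_le_coe_iff]
  refine div_le_div_of_nonneg_right ?_ (by positivity)
  have hk0 : (0 : ℝ) < k := by exact_mod_cast (by omega : 0 < k)
  calc _ ≤ L * Real.log k := mul_le_mul_of_nonneg_right h2 hl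
    _ = Real.log ((k : ℝ) ^ L) := (Real.log_pow _ _).symm
    _ ≤ _ := Real.log_le_log (by positivity) (by exact_mod_cast h1)

/-- Agreement on all indices up to `(1+α) n + |t|` gives the Bowen condition. -/
lemma agree_suff {k : ℕ} (α t : ℝ) (hα : 0 ≤ α) (n : ℕ) (x y : ℕ → Fin k)
    (h : ∀ j < ⌊(1 + α) * n + |t|⌋₊ + 1, y j = x j) :
    ∀ i < n, Real.exp (α * i) * shiftDist ((shiftMap k)^[i] y) ((shiftMap k)^[i] x)
      < Real.exp t := by
  intro i hi
  rw [dist_lt_iff]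
  intro j hj
  rw [iter_shift, iter_shift]
  apply h
  rw [Nat.lt_succ_iff]
  apply Nat.le_floor
  have hi' : (i : ℝ) ≤ n := by exact_mod_cast hi.le
  have := neg_abs_le t
  have := mul_le_mul_of_nonneg_left hi' hα
  push_cast
  linarith

lemma span_upper {k : ℕ} (hk : 2 ≤ k) (α δ : ℝ) (hα : 0 ≤ α) (hδ : 0 < δ) :
    htopSpanE (shiftDist (k := k)) (shiftMap k) α δ
      ≤ (((1 + α) * Real.log k : ℝ) : EReal) := by
  refine limsup_upper hk _ (1 + α) (|Real.log δ| + 1) (by positivity) (by positivity) ?_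
  intro n _
  refine ⟨⌊(1 + α) * n + |Real.log δ|⌋₊ + 1, ?_, ?_⟩
  · refine num_le hk _ _ ?_
    intro x y h
    have := agree_suff α (Real.log δ) hα n x y h
    rwa [Real.exp_log hδ] at this
  · have := Nat.floor_le (a := (1 + α) * n + |Real.log δ|) (by positivity)
    push_cast
    linarith

lemma span_lower {k : ℕ} (hk : 2 ≤ k) (α : ℝ) (hα : 0 ≤ α) :
    (((1 + α) * Real.log k : ℝ) : EReal) ≤
    htopSpanE (shiftDist (k := k)) (shiftMap k) α 1 := by
  refine limsup_lower hk _ (1 + α) (-(1 + α) - 1) ?_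
  intro n hn
  have hn' : (1 : ℝ) ≤ n := by exact_mod_cast hn
  have hT : 0 ≤ (1 + α) * ((n : ℝ) - 1) := mul_nonneg (by linarith) (by linarith)
  refine ⟨⌊(1 + α) * ((n : ℝ) - 1)⌋₊, ?_, ?_⟩
  · refine le_num hk _ _ (⌊(1 + α) * n + |(0 : ℝ)|⌋₊ + 1) ?_ ?_
    · intro x y h
      have := agree_suff α 0 hα n x y h
      rwa [Real.exp_zero] at this
    · intro x y h p hp
      have key : ∀ i < n, ∀ j : ℕ, (j : ℝ) ≤ α * i → y (i + j) = x (i + j) := by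
        intro i hi j hj
        have h1 := h i hi
        rw [← Real.exp_zero, dist_lt_iff] at h1
        have h2 := h1 j (by linarith)
        rwa [iter_shift, iter_shift] at h2
      have hp' : (p : ℝ) ≤ (1 + α) * ((n : ℝ) - 1) :=
        (Nat.cast_le.2 hp.le).trans (Nat.floor_le hT)
      rcases lt_or_ge p n with hpn | hpn
      · simpa using key p hpn 0 (by simp; positivity)
      · have h3 := key (n - 1) (by omega) (p - (n - 1)) (by
          rw [Nat.cast_sub (by omega), Nat.cast_sub hn]
          push_cast
          linarith)
        rwa [show n - 1 + (p - (n - 1)) = p by omega] at h3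
  · have := Nat.lt_floor_add_one ((1 + α) * ((n : ℝ) - 1))
    linarith

lemma neut_agree_suff {k : ℕ} (ε : ℝ) (hε : 0 < ε) (n : ℕ) (x y : ℕ → Fin k)
    (h : ∀ j < ⌊(1 + ε) * n⌋₊ + 1, y j = x j) :
    ∀ j < n, shiftDist ((shiftMap k)^[j] y) ((shiftMap k)^[j] x)
      < Real.exp (-(n : ℝ) * ε) := by
  have hn : (0 : ℝ) ≤ n * ε := by positivity
  have h1 := agree_suff 0 (-(n : ℝ) * ε) le_rfl n x y (by
    rw [neg_mul, abs_neg, abs_of_nonneg hn,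
      show (1 + 0) * (n : ℝ) + n * ε = (1 + ε) * n by ring]
    exact h)
  simpa using h1

lemma neut_upper {k : ℕ} (hk : 2 ≤ k) (ε : ℝ) (hε : 0 < ε) :
    neutEntE (shiftDist (k := k)) (shiftMap k) ε
      ≤ (((1 + ε) * Real.log k : ℝ) : EReal) := by
  refine limsup_upper hk _ (1 + ε) 1 (by positivity) (by positivity) ?_
  intro n _
  refine ⟨⌊(1 + ε) * n⌋₊ + 1, num_le hk _ _ (neut_agree_suff ε hε n), ?_⟩
  have := Nat.floor_le (a := (1 + ε) * n) (by positivity)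
  push_cast
  linarith

lemma neut_lower {k : ℕ} (hk : 2 ≤ k) (ε : ℝ) (hε : 0 < ε) :
    ((Real.log k : ℝ) : EReal) ≤ neutEntE (shiftDist (k := k)) (shiftMap k) ε := by
  have := limsup_lower hk (neutNum (shiftDist (k := k)) (shiftMap k) ε) 1 0 (by
    intro n _
    refine ⟨n, le_num hk _ _ _ (neut_agree_suff ε hε n) ?_, by simp⟩
    intro x y h p hp
    have h1 := h p hp
    rw [← one_mul (shiftDist _ _), ← Real.exp_zero, dist_lt_iff] at h1
    have hn : (0 : ℝ) ≤ n * ε := by positivity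
    have h2 := h1 0 (by simp; linarith)
    rwa [iter_shift, iter_shift] at h2)
  rwa [one_mul] at this

/-- for the full shift on `k ≥ 2` symbols, the neutralized topological
entropy equals `log k`, which is strictly smaller than
`h_top^α(σ,Σ_k^+) = (1+α) log k` for every `α > 0`. -/
theorem stmt18 (k : ℕ) (hk : 2 ≤ k) :
    neutEnt (shiftDist (k := k)) (shiftMap k) = ((Real.log k : ℝ) : EReal) ∧
    ∀ α : ℝ, 0 < α →
      ((Real.log k : ℝ) : EReal) < (((1 + α) * Real.log k : ℝ) : EReal) ∧
      htopSpan (shiftDist (k := k)) (shiftMap k) α =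
        (((1 + α) * Real.log k : ℝ) : EReal) := by
  have hl : 0 < Real.log k := Real.log_pos (by exact_mod_cast (by omega : 1 < k))
  refine ⟨le_antisymm ?_ ?_, fun α hα => ⟨?_, le_antisymm ?_ ?_⟩⟩
  · have h1 : Tendsto (fun ε : ℝ => (((1 + ε) * Real.log k : ℝ) : EReal))
        (nhdsWithin 0 (Set.Ioi 0)) (nhds ((Real.log k : ℝ) : EReal)) := by
      have h2 : Continuous (fun ε : ℝ => (((1 + ε) * Real.log k : ℝ) : EReal)) :=
        continuous_coe_real_ereal.comp (by fun_prop)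
      have h3 := h2.tendsto 0
      simp only [add_zero, one_mul] at h3
      exact h3.mono_left nhdsWithin_le_nhds
    refine ge_of_tendsto h1 ?_
    filter_upwards [self_mem_nhdsWithin] with ε hε
    exact (iInf₂_le ε hε).trans (neut_upper hk ε hε)
  · exact le_iInf₂ fun ε hε => neut_lower hk ε hε
  · rw [EReal.coe_lt_coe_iff]
    nlinarith
  · exact iSup₂_le fun δ hδ => span_upper hk α δ hα.le hδ
  · exact (span_lower hk α hα.le).trans
      (le_iSup₂ (f := fun (δ : ℝ) (_ : 0 < δ) =>
        htopSpanE (shiftDist (k := k)) (shiftMap k) α δ) 1 one_pos)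

end
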